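/- arXiv:2302.11105 — 2 statements merged into one kernel-verified Lean document; each statement's English description precedes it below -/
import Mathlib

section
/- For z in the open unit disc of ℂ, let φ(t) = (t+z)/(1+z̄t) be the Möbius transformation of the disc, and let Ĥ₀⁻¹ act on formal power series by Ĥ₀⁻¹(Σ_{k≥0} c_k t^k) = Σ_{k≥1} (c_k/k) t^k. Then for every n ≥ 1, (φ⁻¹ ∘ Ĥ₀⁻¹ ∘ φ)(tⁿ) = Σ_{k≥1} a_k^n t^k, where a_k^n = (1/k)(1-|z|^{2k}) z^{n-k} for 1 ≤ k ≤ n, and a_k^n = (1/k) z̄^{k-n}(1-|z|^{2n}) for k ≥ n. -/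
/-- The coefficients `a_k^n`: `a_k^n = (1/k)(1-|z|^{2k}) z^{n-k}` for `1 ≤ k ≤ n` and
`a_k^n = (1/k) z̄^{k-n} (1-|z|^{2n})` for `k ≥ n` (with `a_0^n = 0`); note
`|z|^{2j} = (z z̄)^j`. -/
noncomputable def acoef (z : ℂ) (n k : ℕ) : ℂ :=
  if k = 0 then 0
  else if k ≤ n then (1 - (z * (starRingEnd ℂ) z) ^ k) * z ^ (n - k) / k
  else ((starRingEnd ℂ) z) ^ (k - n) * (1 - (z * (starRingEnd ℂ) z) ^ n) / k

/-- The Möbius transformation `φ(t) = (t+z)/(1+z̄t)` of the unit disc. -/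
noncomputable def phiMob (z t : ℂ) : ℂ := (t + z) / (1 + (starRingEnd ℂ) z * t)

lemma acoef_mul (z : ℂ) (n k : ℕ) : acoef z n (k+1) * ((k:ℂ)+1) =
    if k + 1 ≤ n then (1 - (z * (starRingEnd ℂ) z) ^ (k+1)) * z ^ (n - (k+1))
    else ((starRingEnd ℂ) z) ^ (k + 1 - n) * (1 - (z * (starRingEnd ℂ) z) ^ n) := by
  have h : ((k:ℂ)+1) ≠ 0 := by exact_mod_cast Nat.succ_ne_zero k
  unfold acoef
  rw [if_neg (Nat.succ_ne_zero k)]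
  split_ifs
  · push_cast; field_simp
  · push_cast; field_simp

lemma acoef_bound (z : ℂ) (hz : ‖z‖ < 1) (n k : ℕ) : ‖acoef z n (k+1) * ((k:ℂ)+1)‖ ≤ 2 := by
  have hq : ‖z * (starRingEnd ℂ) z‖ ≤ 1 := by
    rw [norm_mul, RCLike.norm_conj]
    nlinarith [norm_nonneg z]
  have h1 : ∀ m : ℕ, ‖1 - (z * (starRingEnd ℂ) z) ^ m‖ ≤ 2 := by
    intro m
    have := norm_sub_le (1:ℂ) ((z * (starRingEnd ℂ) z) ^ m)
    have h2 : ‖(z * (starRingEnd ℂ) z) ^ m‖ ≤ 1 := by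
      rw [norm_pow]; exact pow_le_one₀ (norm_nonneg _) hq
    rw [norm_one] at this
    linarith
  have h3 : ∀ m : ℕ, ‖z ^ m‖ ≤ 1 := by
    intro m; rw [norm_pow]; exact pow_le_one₀ (norm_nonneg _) hz.le
  have h4 : ∀ m : ℕ, ‖((starRingEnd ℂ) z) ^ m‖ ≤ 1 := by
    intro m; rw [norm_pow, RCLike.norm_conj]; exact pow_le_one₀ (norm_nonneg _) hz.le
  rw [acoef_mul]
  split_ifs
  · rw [norm_mul]
    nlinarith [h1 (k+1), h3 (n-(k+1)), norm_nonneg (z ^ (n-(k+1))),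
      norm_nonneg (1 - (z * (starRingEnd ℂ) z) ^ (k+1))]
  · rw [norm_mul]
    nlinarith [h1 n, h4 (k+1-n), norm_nonneg (((starRingEnd ℂ) z) ^ (k+1-n)),
      norm_nonneg (1 - (z * (starRingEnd ℂ) z) ^ n)]

lemma summable_d (z : ℂ) (hz : ‖z‖ < 1) (n : ℕ) (w : ℂ) (hw : ‖w‖ < 1) :
    Summable (fun k : ℕ => acoef z n (k+1) * ((k:ℂ)+1) * w ^ k) := by
  refine Summable.of_norm_bounded (g := fun k => 2 * ‖w‖ ^ k)
    ((summable_geometric_of_lt_one (norm_nonneg _) hw).mul_left 2) ?_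
  intro k
  rw [norm_mul, norm_pow]
  exact mul_le_mul_of_nonneg_right (acoef_bound z hz n k) (by positivity)

lemma hasDerivAt_G (z : ℂ) (hz : ‖z‖ < 1) (n : ℕ) (w : ℂ) (hw : ‖w‖ < 1) :
    HasDerivAt (fun s => ∑' k : ℕ, acoef z n k * s ^ k)
      (∑' k : ℕ, acoef z n (k+1) * ((k:ℂ)+1) * w ^ k) w := by
  obtain ⟨r, hr1, hr2⟩ := exists_between hw
  have hr0 : 0 < r := (norm_nonneg w).trans_lt hr1
  have key : HasDerivAt (fun s => ∑' k : ℕ, acoef z n k * s ^ k)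
      (∑' k : ℕ, acoef z n k * ((k:ℂ) * w ^ (k-1))) w := by
    refine hasDerivAt_tsum_of_isPreconnected
      (u := fun k : ℕ => 2 * r ^ (k-1)) (t := Metric.ball (0:ℂ) r)
      (g := fun k s => acoef z n k * s ^ k)
      (g' := fun k s => acoef z n k * ((k:ℂ) * s ^ (k-1))) (y₀ := 0)
      ?_ Metric.isOpen_ball (convex_ball _ _).isPreconnected ?_ ?_ ?_ ?_ ?_
    · rw [← summable_nat_add_iff 1]
      simpa using (summable_geometric_of_lt_one hr0.le hr2).mul_left 2
    · intro k y _
      exact (hasDerivAt_pow k y).const_mul _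
    · intro k y hy
      have hy' : ‖y‖ < r := by simpa using hy
      cases k with
      | zero => simp
      | succ k =>
        have := acoef_bound z hz n k
        simp only [Nat.cast_add, Nat.cast_one, Nat.add_sub_cancel]
        rw [← mul_assoc, norm_mul, norm_pow]
        gcongr
    · simpa using hr0
    · apply summable_of_ne_finset_zero (s := {0})
      intro b hb
      have : b ≠ 0 := by simpa using hb
      simp [this]
    · simpa using hr1
  convert key using 1
  have hs : Summable (fun k : ℕ => acoef z n k * ((k:ℂ) * w ^ (k-1))) := by
    rw [← summable_nat_add_iff 1]
    simpa [mul_assoc] using summable_d z hz n w hw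
  rw [hs.tsum_eq_zero_add]
  simp [mul_assoc]

lemma d_rec (z : ℂ) (n k : ℕ) :
    acoef z n (k+1+1) * (((k+1:ℕ):ℂ)+1) - (starRingEnd ℂ) z * (acoef z n (k+1) * ((k:ℂ)+1))
      = if k + 1 < n then (1 - z * (starRingEnd ℂ) z) * z ^ (n - 1 - (k+1)) else 0 := by
  rw [acoef_mul, acoef_mul]
  by_cases h : k + 1 < n
  · rw [if_pos (by omega), if_pos (by omega), if_pos h]
    obtain ⟨m, rfl⟩ : ∃ m, n = k + 2 + m := ⟨n - (k+2), by omega⟩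
    rw [show k + 2 + m - (k+1+1) = m by omega, show k + 2 + m - (k+1) = m + 1 by omega,
      show k + 2 + m - 1 - (k+1) = m by omega]
    ring
  · rw [if_neg (by omega), if_neg h]
    by_cases h2 : k + 1 ≤ n
    · obtain rfl : n = k + 1 := by omega
      rw [if_pos h2]
      simp
    · rw [if_neg h2]
      obtain ⟨m, hm⟩ : ∃ m, k + 1 = n + m := ⟨k + 1 - n, by omega⟩
      rw [show k + 1 + 1 - n = m + 1 by omega, show k + 1 - n = m by omega]
      ring

lemma D_eq (z : ℂ) (hz : ‖z‖ < 1) (n : ℕ) (hn : 1 ≤ n) (w : ℂ) (hw : ‖w‖ < 1) :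
    (∑' k : ℕ, acoef z n (k+1) * ((k:ℂ)+1) * w ^ k) * (1 - (starRingEnd ℂ) z * w)
      = (1 - z * (starRingEnd ℂ) z) * ∑ i ∈ Finset.range n, w ^ i * z ^ (n - 1 - i) := by
  have hs := summable_d z hz n w hw
  have hs1 := (summable_nat_add_iff 1).2 hs
  have h2 : (1 - z * (starRingEnd ℂ) z) * ∑ i ∈ Finset.range n, w ^ i * z ^ (n - 1 - i)
      = ∑' i : ℕ, if i < n then (1 - z * (starRingEnd ℂ) z) * (w ^ i * z ^ (n - 1 - i)) else 0 := by
    rw [tsum_eq_sum (s := Finset.range n), Finset.mul_sum]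
    · apply Finset.sum_congr rfl
      intro i hi
      rw [if_pos (by simpa using hi)]
    · intro i hi
      rw [if_neg (by simpa using hi)]
  have hs3 : Summable (fun i : ℕ => if i < n then
      (1 - z * (starRingEnd ℂ) z) * (w ^ i * z ^ (n - 1 - i)) else 0) := by
    apply summable_of_ne_finset_zero (s := Finset.range n)
    intro i hi
    rw [if_neg (by simpa using hi)]
  rw [h2, hs3.tsum_eq_zero_add, mul_sub, mul_one]
  nth_rewrite 1 [hs.tsum_eq_zero_add]
  rw [add_sub_assoc, ← tsum_mul_right, ← hs1.tsum_sub (hs.mul_right _)]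
  congr 1
  · rw [acoef_mul, if_pos (by omega), if_pos (by omega)]
    simp
  · apply tsum_congr
    intro k
    have := d_rec z n k
    calc _ = (acoef z n (k+1+1) * (((k+1:ℕ):ℂ)+1)
          - (starRingEnd ℂ) z * (acoef z n (k+1) * ((k:ℂ)+1))) * w ^ (k+1) := by ring
      _ = _ := by
        rw [this]
        split_ifs <;> ring

lemma denom_ne (z : ℂ) (hz : ‖z‖ < 1) (t : ℂ) (ht : ‖t‖ < 1) :
    1 + (starRingEnd ℂ) z * t ≠ 0 := by
  intro h
  have h1 : (starRingEnd ℂ) z * t = -1 := by linear_combination h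
  have h2 : ‖z‖ * ‖t‖ = 1 := by
    rw [← RCLike.norm_conj z, ← norm_mul, h1]; simp
  nlinarith [norm_nonneg z, norm_nonneg t]

lemma phi_lt (z : ℂ) (hz : ‖z‖ < 1) (t : ℂ) (ht : ‖t‖ < 1) : ‖phiMob z t‖ < 1 := by
  have h0 := denom_ne z hz t ht
  unfold phiMob
  rw [norm_div, div_lt_one (norm_pos_iff.2 h0)]
  apply lt_of_pow_lt_pow_left₀ 2 (norm_nonneg _)
  have e1 : ‖z‖ ^ 2 < 1 := by nlinarith [norm_nonneg z]
  have e2 : ‖t‖ ^ 2 < 1 := by nlinarith [norm_nonneg t]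
  simp only [← Complex.normSq_eq_norm_sq, Complex.normSq_apply] at *
  simp at *
  nlinarith [mul_pos (sub_pos.2 e1) (sub_pos.2 e2)]

theorem stmt13 (z : ℂ) (hz : ‖z‖ < 1) (n : ℕ) (hn : 1 ≤ n) :
    (∀ t : ℂ, ‖t‖ < 1 →
      t * deriv (fun s => ∑' k : ℕ, acoef z n k * phiMob z s ^ k) t
        = phiMob z t ^ n - z ^ n) ∧
    (∑' k : ℕ, acoef z n k * phiMob z (-z) ^ k) = 0 := by
  constructor
  · intro t ht
    have h0 := denom_ne z hz t ht
    have hw := phi_lt z hz t ht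
    have hφ : HasDerivAt (phiMob z) ((1 * (1 + (starRingEnd ℂ) z * t)
        - (t + z) * ((starRingEnd ℂ) z * 1)) / (1 + (starRingEnd ℂ) z * t) ^ 2) t :=
      ((hasDerivAt_id t).add_const z).fun_div
        (((hasDerivAt_id t).const_mul _).const_add 1) h0
    have hc := (hasDerivAt_G z hz n _ hw).comp t hφ
    have hd := hc.deriv
    have hD := D_eq z hz n hn _ hw
    have hg := (Commute.all (phiMob z t) z).geom_sum₂_mul n
    simp only [Function.comp_def] at hd
    rw [hd, ← hg]
    have hq : 1 - z * (starRingEnd ℂ) z ≠ 0 := by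
      have := denom_ne z hz (-z) (by simpa using hz)
      intro h; apply this; linear_combination h
    generalize (∑' k : ℕ, acoef z n (k+1) * ((k:ℂ)+1) * phiMob z t ^ k) = D at *
    generalize (∑ i ∈ Finset.range n, phiMob z t ^ i * z ^ (n - 1 - i)) = S at *
    have e1 : 1 - (starRingEnd ℂ) z * phiMob z t
        = (1 - z * (starRingEnd ℂ) z) / (1 + (starRingEnd ℂ) z * t) := by
      unfold phiMob; field_simp; ring
    have e2 : phiMob z t - z
        = t * (1 - z * (starRingEnd ℂ) z) / (1 + (starRingEnd ℂ) z * t) := by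
      rw [eq_div_iff h0, sub_mul]
      unfold phiMob
      rw [div_mul_cancel₀ _ h0]
      ring
    have e3 : D = S * (1 + (starRingEnd ℂ) z * t) := by
      rw [e1] at hD
      field_simp at hD
      linear_combination hD
    rw [e2, e3]
    field_simp
    ring
  · have : phiMob z (-z) = 0 := by simp [phiMob]
    rw [this, tsum_eq_single 0]
    · simp [acoef]
    · intro b hb
      simp [hb]
end

section
/- Let g = so₈(ℂ) (type D₄) with the order-3 diagram automorphism σ corresponding to the 3-cycle (134) on the Dynkin diagram, so g^σ is of type G₂. Then the partial Casimir operator C₁ = Σ_{[b]=1} ad_b ad_{b̌} (summed over a basis of the ε-eigenspace g₁ with dual basis in g₂, with respect to the normalized invariant form) acts on g₁ by the scalar 4 = 2ȟ/3, where ȟ = 6 is the dual Coxeter number of D₄. -/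
open LieModule LieAlgebra in
theorem aux_sl2_int {L V : Type*} [LieRing L] [LieAlgebra ℂ L] [AddCommGroup V] [Module ℂ V]
    [Module.Finite ℂ V] [LieRingModule L V] [LieModule ℂ L V] {h e f : L} (t : IsSl2Triple h e f)
    (μ : ℂ) (hμ : (toEnd ℂ L V h).HasEigenvalue μ) : ∃ n : ℤ, μ = n := by
  obtain ⟨m, hm⟩ := hμ.exists_hasEigenvector
  have hm0 : m ≠ 0 := hm.2
  have hm1 : ⁅h, m⁆ = μ • m := by simpa using hm.apply_eq_smul
  have hz : ∃ k : ℕ, ((toEnd ℂ L V e) ^ k) m = 0 := by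
    by_contra! hne
    have hs : (Set.range (fun n : ℕ => μ + 2 * (n : ℂ))).Infinite := by
      apply Set.infinite_range_of_injective
      intro a b hab
      simpa using hab
    have := (toEnd ℂ L V h).eigenvectors_linearIndependent
      (Set.range (fun n : ℕ => μ + 2 * (n : ℂ)))
      (fun s => ((toEnd ℂ L V e) ^ (Classical.choose s.2)) m)
      (fun s => by
        rw [Module.End.hasEigenvector_iff, Module.End.mem_eigenspace_iff]
        refine ⟨?_, hne _⟩
        have h1 := IsSl2Triple.lie_h_pow_toEnd_e (R := ℂ) t hm1 (Classical.choose s.2)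
        have h2 := Classical.choose_spec s.2
        simp only at h2
        rw [h2] at h1
        simpa using h1)
    exact hs this.finite
  obtain ⟨n, hn₁, hn₂⟩ := Nat.exists_not_and_succ_of_not_zero_of_exists
    (p := fun k => ((toEnd ℂ L V e) ^ k) m = 0) (by simpa using hm0) hz
  have P : t.HasPrimitiveVectorWith (((toEnd ℂ L V e) ^ n) m) (μ + 2 * n) :=
    { ne_zero := hn₁
      lie_h := IsSl2Triple.lie_h_pow_toEnd_e (R := ℂ) t hm1 n
      lie_e := by
        have := hn₂
        rw [pow_succ'] at this
        simpa using this }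
  obtain ⟨k, hk⟩ := P.exists_nat
  exact ⟨k - 2 * n, by push_cast; rw [← hk]; ring⟩

open LieModule LieAlgebra in
theorem aux_sl2_trace {L V : Type*} [LieRing L] [LieAlgebra ℂ L] [AddCommGroup V] [Module ℂ V]
    [Module.Finite ℂ V] [LieRingModule L V] [LieModule ℂ L V] {h e f : L} (t : IsSl2Triple h e f) :
    ∃ n : ℤ, traceForm ℂ L V h h = n := by
  classical
  rw [traceForm_apply_apply, Module.End.trace_eq_sum_roots_charpoly_of_splits
    (IsAlgClosed.splits _)]
  have h2 : ∀ z ∈ (toEnd ℂ L V h ∘ₗ toEnd ℂ L V h).charpoly.roots, ∃ n : ℤ, z = n := by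
    intro z hz
    have hz' := Polynomial.isRoot_of_mem_roots hz
    rw [← Module.End.hasEigenvalue_iff_isRoot_charpoly] at hz'
    obtain ⟨m, hm⟩ := hz'.exists_hasEigenvector
    have hm0 : m ≠ 0 := hm.2
    have hm1 : ⁅h, ⁅h, m⁆⁆ = z • m := by simpa using hm.apply_eq_smul
    obtain ⟨μ, hμ⟩ := IsAlgClosed.exists_pow_nat_eq z (n := 2) (by norm_num)
    have key : ∃ n : ℤ, μ = n := by
      by_cases hc : ⁅h, m⁆ + μ • m = 0
      · obtain ⟨n, hn⟩ := aux_sl2_int (V := V) t (-μ)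
          (Module.End.hasEigenvalue_of_hasEigenvector (x := m)
            (by rw [Module.End.hasEigenvector_iff, Module.End.mem_eigenspace_iff]
                exact ⟨by simpa using eq_neg_of_add_eq_zero_left hc, hm0⟩))
        exact ⟨-n, by push_cast; rw [← hn]; ring⟩
      · exact aux_sl2_int (V := V) t μ
          (Module.End.hasEigenvalue_of_hasEigenvector (x := ⁅h, m⁆ + μ • m)
            (by rw [Module.End.hasEigenvector_iff, Module.End.mem_eigenspace_iff]
                refine ⟨?_, hc⟩
                simp only [toEnd_apply_apply, lie_add, lie_smul, hm1, ← hμ, smul_add, smul_smul,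
                  pow_two]
                abel))
    obtain ⟨n, hn⟩ := key
    exact ⟨n ^ 2, by rw [← hμ, hn]; push_cast; rfl⟩
  revert h2
  generalize (toEnd ℂ L V h ∘ₗ toEnd ℂ L V h).charpoly.roots = s
  intro h2
  induction s using Multiset.induction_on with
  | empty => exact ⟨0, by simp⟩
  | cons a s ih =>
    obtain ⟨n, hn⟩ := ih (fun z hz => h2 z (by simp [hz]))
    obtain ⟨k, hk⟩ := h2 a (by simp)
    refine ⟨k + n, ?_⟩
    rw [Multiset.sum_cons, hn, hk]
    push_cast; ring

theorem aux_root {ι M N : Type*} [Finite ι] [Nonempty ι] [AddCommGroup M] [Module ℂ M] [AddCommGroup N] [Module ℂ N]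
    (P : RootPairing ι ℂ M N) [P.IsRootSystem] [P.IsCrystallographic] [P.IsReduced] [Fintype ι]  :
    ∃ (i : ι) (n : ℕ), Even n ∧ 2 * n + 2 ≤ Fintype.card ι ∧
      ∑ j, P.pairing j i * P.pairing j i = 8 + 2 * n := by
  classical
  obtain ⟨i, hi⟩ := Finite.exists_max (fun i => (P.posRootForm ℤ).rootLength i)
  let p : ι → ℤ := fun j => P.pairingIn ℤ j i
  have hp : ∀ j, P.pairing j i = (p j : ℂ) := fun j => by
    simpa using (P.algebraMap_pairingIn ℤ j i).symm
  let m : ι := P.reflectionPerm i i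
  have hm : P.root m = - P.root i := by simp [m, P.root_reflectionPerm]
  have hpi : p i = 2 := by simp [p]
  have hpm : p m = -2 := by simp [p, m]
  have hrefl : ∀ j, p (P.reflectionPerm i j) = - p j := fun j => by
    have : P.pairing (P.reflectionPerm i j) i = - P.pairing j i := by
      rw [← P.pairing_reflectionPerm, P.pairing_reflectionPerm_self_right]
    rw [hp, hp] at this
    exact_mod_cast this
  have hneg : ∀ j, p (P.reflectionPerm j j) = - p j := fun j => by simp [p]
  have h1 : ∀ j, j ≠ i → j ≠ m → p j = -1 ∨ p j = 0 ∨ p j = 1 := by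
    intro j h1 h2
    by_contra hc
    have := (P.posRootForm ℤ).rootLength_lt_of_pairingIn_notMem (i := j) (j := i)
      (fun h => h1 (P.root.injective h)) (fun h => h2 (P.root.injective (h.trans hm.symm)))
      (by simpa [p] using hc)
    exact absurd (hi j) (not_le.mpr this)
  have him : i ≠ m := by
    intro h; rw [← h] at hpm; omega
  let S : Finset ι := {j | p j = 1}
  let S' : Finset ι := {j | p j = -1}
  have hcard : S'.card = S.card := by
    apply Finset.card_bij' (fun j _ => P.reflectionPerm i j) (fun j _ => P.reflectionPerm i j)
    · intro j hj; simp only [S, S', Finset.mem_filter, Finset.mem_univ, true_and] at hj ⊢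
      rw [hrefl, hj]; rfl
    · intro j hj; simp only [S, S', Finset.mem_filter, Finset.mem_univ, true_and] at hj ⊢
      rw [hrefl, hj]
    · intro j _; simp
    · intro j _; simp
  have hinj : ∀ a b, P.root a = P.root b → a = b := fun a b h => P.root.injective h
  have heven : Even S.card := by
    rw [← ZMod.natCast_eq_zero_iff_even, Finset.cast_card]
    let τ : ι → ι := fun j => P.reflectionPerm (P.reflectionPerm i j) (P.reflectionPerm i j)
    have hτ : ∀ j, P.root (τ j) = P.pairing j i • P.root i - P.root j := by
      intro j
      have hk : ∀ k, P.root (P.reflectionPerm k k) = - P.root k := fun k => by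
        simp [P.root_reflectionPerm]
      simp only [τ]
      rw [hk, P.root_reflectionPerm, P.reflection_apply_root]
      abel
    refine Finset.sum_involution (fun j _ => τ j) ?_ ?_ ?_ ?_
    · intros; decide
    · intro j hj _ he
      simp only [S, Finset.mem_filter, Finset.mem_univ, true_and] at hj
      have h2 := hτ j
      rw [he, hp, hj] at h2
      have h3 : P.root i = (2 : ℂ) • P.root j := by
        rw [two_smul]
        simp only [Int.cast_one, one_smul] at h2
        exact (eq_sub_iff_add_eq.mp h2).symm
      have : Module.IsReflexive ℂ M := .of_isPerfPair P.toLinearMap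
      have : IsAddTorsionFree M := .of_isTorsionFree ℂ M
      refine P.nsmul_notMem_range_root (n := 2) (i := j) ⟨i, ?_⟩
      rw [h3, two_smul, two_smul]
    · intro j hj
      simp only [S, Finset.mem_filter, Finset.mem_univ, true_and] at hj ⊢
      simp only [τ]
      rw [hneg, hrefl, hj]; rfl
    · intro j hj
      simp only [S, Finset.mem_filter, Finset.mem_univ, true_and] at hj
      apply hinj
      have : p (τ j) = 1 := by simp only [τ]; rw [hneg, hrefl, hj]; rfl
      rw [hτ, hτ, hp, hp, this, hj]; simp
  have hd1 : Disjoint S S' := by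
    rw [Finset.disjoint_left]; intro j; simp only [S, S', Finset.mem_filter, Finset.mem_univ, true_and]; omega
  have hd2 : Disjoint ({i, m} : Finset ι) (S ∪ S') := by
    rw [Finset.disjoint_left]; intro j
    simp only [S, S', Finset.mem_union, Finset.mem_filter, Finset.mem_univ, true_and, Finset.mem_insert, Finset.mem_singleton]
    rintro (rfl | rfl) <;> omega
  refine ⟨i, S.card, heven, ?_, ?_⟩
  · calc 2 * S.card + 2 = (({i, m} : Finset ι) ∪ (S ∪ S')).card := by
          rw [Finset.card_union_of_disjoint hd2, Finset.card_union_of_disjoint hd1, hcard,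
            Finset.card_pair him]; ring
      _ ≤ _ := Finset.card_le_univ _
  · have : ∑ j ∈ (({i, m} : Finset ι) ∪ (S ∪ S')), P.pairing j i * P.pairing j i = ∑ j, P.pairing j i * P.pairing j i := by
      apply Finset.sum_subset (Finset.subset_univ _)
      intro j _ hj
      simp only [S, S', Finset.mem_union, Finset.mem_filter, Finset.mem_univ, true_and, Finset.mem_insert, Finset.mem_singleton, not_or] at hj
      have := h1 j hj.1.1 hj.1.2
      have h0 : p j = 0 := by omega
      rw [hp, h0]; simp
    rw [← this, Finset.sum_union hd2, Finset.sum_union hd1, Finset.sum_pair him,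
      Finset.sum_congr (g := fun _ => (1:ℂ)) (s₁ := S) rfl, Finset.sum_congr (g := fun _ => (1:ℂ)) (s₁ := S') rfl]
    · rw [hp, hp, hpi, hpm]; simp [hcard]; ring
    · intro j hj
      simp only [S', Finset.mem_filter, Finset.mem_univ, true_and] at hj
      rw [hp, hj]; simp
    · intro j hj
      simp only [S, Finset.mem_filter, Finset.mem_univ, true_and] at hj
      rw [hp, hj]; simp

open LieModule LieAlgebra LieAlgebra.IsKilling in
theorem aux_Y {L V : Type*} [LieRing L] [LieAlgebra ℂ L] [Module.Finite ℂ L] [IsKilling ℂ L]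
    [AddCommGroup V] [Module ℂ V]
    [Module.Finite ℂ V] [LieRingModule L V] [LieModule ℂ L V] (hL : Module.finrank ℂ L = 13)
    (hyp : ∀ x : L, 3 * killingForm ℂ L x x = 7 * traceForm ℂ L V x x) : False := by
  classical
  obtain ⟨H, hH⟩ : ∃ H : LieSubalgebra ℂ L, H.IsCartanSubalgebra :=
    ⟨_, (LieAlgebra.exists_isCartanSubalgebra_engel ℂ L).choose_spec⟩
  have hn : Nonempty H.root := by
    by_contra hc
    have h0 := span_weight_isNonZero_eq_top ℂ L H
    have h1 : {α : Weight ℂ H L | α.IsNonZero} = ∅ := by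
      rw [Set.eq_empty_iff_forall_notMem]
      intro a ha
      exact hc ⟨a, by simpa using ha⟩
    rw [h1, Set.image_empty, Submodule.span_empty] at h0
    have h2 : ∀ y : H, y = 0 := by
      intro y
      rw [← Module.forall_dual_apply_eq_zero_iff ℂ y]
      intro φ
      have : φ ∈ (⊤ : Submodule ℂ (Module.Dual ℂ H)) := trivial
      rw [← h0, Submodule.mem_bot] at this
      rw [this]; rfl
    have h3 : ∀ x : L, x = 0 := by
      intro x
      have hx : x ∈ H.normalizer := by
        rw [LieSubalgebra.mem_normalizer_iff]
        intro y hy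
        have := h2 ⟨y, hy⟩
        have : y = 0 := congrArg Subtype.val this
        rw [this]; simp
      rw [hH.self_normalizing] at hx
      exact congrArg Subtype.val (h2 ⟨x, hx⟩)
    have : Subsingleton L := ⟨fun a b => (h3 a).trans (h3 b).symm⟩
    rw [Module.finrank_zero_of_subsingleton] at hL
    omega
  obtain ⟨i, n, hev, hcard, hsum⟩ := aux_root (rootSystem H)
  have hα : i.1.IsNonZero := by
    have := i.2
    exact (Finset.mem_filter.mp this).2
  obtain ⟨h, e, f, t, he, hf⟩ := exists_isSl2Triple_of_weight_isNonZero hα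
  obtain ⟨p, hp⟩ := aux_sl2_trace (V := V) t
  have hc := t.h_eq_coroot hα he hf
  have h1 : killingForm ℂ L h h = 8 + 2 * n := by
    rw [← hsum, hc]
    have h5 := congrArg (fun F => F (coroot i.1) (coroot i.1))
      (restrict_killingForm_eq_sum (K := ℂ) (L := L) (H := H))
    rw [← Finset.sum_coe_sort] at h5
    simp at h5 ⊢
    exact h5
  have h2 := hyp h
  rw [h1, hp] at h2
  have h3 : (3 : ℤ) * (8 + 2 * n) = 7 * p := by exact_mod_cast h2
  have h4 : Fintype.card H.root ≤ 13 := by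
    have hi := LieSubmodule.iSupIndep_toSubmodule.mpr (LieModule.iSupIndep_genWeightSpace' ℂ H L)
    have := hi.subtype_ne_bot_le_finrank
    rw [← hL]
    refine le_trans ?_ this
    refine Fintype.card_le_of_injective (fun a => ⟨a.1, ?_⟩) ?_
    · have := a.1.genWeightSpace_ne_bot
      simpa using this
    · intro a a' h
      exact Subtype.ext (congrArg (fun z => z.1) h)
  obtain ⟨k, hk⟩ := hev
  omega

theorem aux_iso {A V : Type*} [Ring A] [Algebra ℂ A] [AddCommGroup V] [Module ℂ V] [Module A V]
    [IsScalarTower ℂ A V] [Module.Finite ℂ V] (hV : Module.finrank ℂ V = 7)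
    (W : Submodule A V) [IsSimpleModule A W] (hC : isotypicComponent A V W = ⊤) :
    (∀ a : A, ∃ c : ℂ, ∀ m : V, a • m = c • m) ∨ W = ⊤ := by
  classical
  have hss : IsSemisimpleModule A V := by
    have h1 : IsSemisimpleModule A (isotypicComponent A V W) := inferInstance
    rw [hC] at h1
    exact IsSemisimpleModule.congr (Submodule.topEquiv (R := A) (M := V)).symm
  have hfin : Module.Finite A V := Module.Finite.of_restrictScalars_finite ℂ A V
  have hiso := IsIsotypicOfType.of_isotypicComponent_eq_top hC
  obtain ⟨n, ⟨e⟩⟩ := hiso.linearEquiv_fun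
  have hWf : Module.Finite ℂ W := inferInstanceAs (Module.Finite ℂ (W.restrictScalars ℂ))
  have hd : n * Module.finrank ℂ W = 7 := by
    rw [← hV, (e.restrictScalars ℂ).finrank_eq, Module.finrank_pi_fintype]
    simp
  have hdvd : Module.finrank ℂ W ∣ 7 := ⟨n, by rw [← hd, mul_comm]⟩
  rcases (Nat.dvd_prime (by norm_num)).mp hdvd with h1 | h7
  · left
    intro a
    obtain ⟨w, hw0, hw⟩ := finrank_eq_one_iff'.mp h1
    obtain ⟨c, hc⟩ := hw (a • w)
    refine ⟨c, fun m => ?_⟩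
    apply e.injective
    rw [map_smul]
    have : e (c • m) = c • e m := (e.restrictScalars ℂ).map_smul c m
    rw [this]
    ext k : 1
    rw [Pi.smul_apply, Pi.smul_apply]
    obtain ⟨d, hd⟩ := hw (e m k)
    rw [← hd, smul_comm, ← hc, smul_comm]
  · right
    have h2 : W.restrictScalars ℂ = ⊤ := by
      apply Submodule.eq_top_of_finrank_eq
      rw [hV]; exact h7
    simpa using h2

open LieModule LieAlgebra in
theorem aux_X {L V : Type*} [LieRing L] [LieAlgebra ℂ L] [Module.Finite ℂ L] [IsSemisimple ℂ L]
    [AddCommGroup V] [Module ℂ V]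
    [Module.Finite ℂ V] [LieRingModule L V] [LieModule ℂ L V] (hV : Module.finrank ℂ V = 7)
    [LieModule.IsIrreducible ℂ L V]
    (hf : ∀ x : L, (∀ m : V, ⁅x, m⁆ = 0) → x = 0)
    (htr : ∀ x : L, LinearMap.trace ℂ V (toEnd ℂ L V x) = 0) (J : LieIdeal ℂ L) :
    J = ⊥ ∨ J = ⊤ := by
  classical
  obtain ⟨K, hK⟩ := exists_isCompl J
  have hJK : ∀ x ∈ J, ∀ y ∈ K, ⁅x, y⁆ = 0 := by
    intro x hx y hy
    have h1 : ⁅x, y⁆ ∈ J ⊓ K := by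
      refine ⟨?_, lie_mem_right ℂ L K x y hy⟩
      rw [← lie_skew]
      exact neg_mem (lie_mem_right ℂ L J y x hx)
    rw [hK.inf_eq_bot] at h1
    simpa using h1
  have hscal : ∀ (x : L) (c : ℂ), (∀ m : V, ⁅x, m⁆ = c • m) → x = 0 := by
    intro x c h
    have h1 : toEnd ℂ L V x = c • LinearMap.id := by ext m; simpa using h m
    have h2 := htr x
    rw [h1, map_smul, LinearMap.trace_id, hV] at h2
    have h3 : c = 0 := by simpa using h2
    apply hf; intro m; rw [h m, h3, zero_smul]
  let A : Subalgebra ℂ (Module.End ℂ V) := Algebra.adjoin ℂ ((toEnd ℂ L V) '' (J : Set L))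
  have hnt : Nontrivial V := Module.nontrivial_of_finrank_pos (R := ℂ) (by omega)
  have hart : IsArtinian A V := isArtinian_of_tower ℂ inferInstance
  obtain ⟨W, hW⟩ := IsAtomic.exists_atom (Submodule A V)
  have hWs : IsSimpleModule A W := isSimpleModule_iff_isAtom.mpr hW
  -- the action of K commutes with A
  have hcomm : ∀ y ∈ K, ∀ a ∈ A, a * toEnd ℂ L V y = toEnd ℂ L V y * a := by
    intro y hy a ha
    induction ha using Algebra.adjoin_induction with
    | mem a ha =>
      obtain ⟨x, hx, rfl⟩ := ha
      ext m
      have := lie_lie x y m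
      rw [hJK x hx y hy, zero_lie] at this
      simpa using (sub_eq_zero.mp this.symm)
    | algebraMap r => exact Algebra.commutes r _
    | add a b _ _ h1 h2 => rw [add_mul, mul_add, h1, h2]
    | mul a b _ _ h1 h2 => rw [mul_assoc, h2, ← mul_assoc, h1, mul_assoc]
  let kend : ∀ y ∈ K, V →ₗ[A] V := fun y hy =>
    { toFun := fun m => ⁅y, m⁆
      map_add' := lie_add y
      map_smul' := by
        intro a m
        exact (LinearMap.congr_fun (hcomm y hy a.1 a.2) m).symm }
  let C := isotypicComponent A V W
  have hWC : W ≤ C := W.le_isotypicComponent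
  let N : LieSubmodule ℂ L V :=
    { C.restrictScalars ℂ with
      lie_mem := by
        intro x m hm
        have hx : x ∈ J ⊔ K := by rw [hK.sup_eq_top]; trivial
        obtain ⟨u, hu, v, hv, rfl⟩ := LieSubmodule.mem_sup _ _ _ |>.mp hx
        rw [add_lie]
        apply add_mem
        · exact C.smul_mem ⟨toEnd ℂ L V u, Algebra.subset_adjoin ⟨u, hu, rfl⟩⟩ hm
        · exact LinearMap.le_comap_isotypicComponent W (kend v hv) hm }
  have hN : N = ⊤ := by
    refine (eq_bot_or_eq_top N).resolve_left ?_
    intro h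
    apply hW.1
    rw [eq_bot_iff]
    intro m hm
    have : m ∈ N := hWC hm
    rw [h] at this
    simpa using this
  have hC : C = ⊤ := by
    rw [eq_top_iff]
    intro m _
    have : m ∈ N := by rw [hN]; trivial
    exact this
  rcases aux_iso hV W hC with h1 | hWt
  · left
    rw [eq_bot_iff]
    intro x hx
    rw [LieSubmodule.mem_bot]
    obtain ⟨c, hc⟩ := h1 ⟨toEnd ℂ L V x, Algebra.subset_adjoin ⟨x, hx, rfl⟩⟩
    exact hscal x c hc
  · right
    have hKb : K = ⊥ := by
      rw [eq_bot_iff]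
      intro y hy
      rw [LieSubmodule.mem_bot]
      obtain ⟨c, hc⟩ := Module.End.exists_eigenvalue (toEnd ℂ L V y)
      obtain ⟨v, hv⟩ := hc.exists_hasEigenvector
      apply hscal y c
      let E : Submodule A V :=
        { carrier := {m | ⁅y, m⁆ = c • m}
          add_mem' := by
            intro m m' h h'
            simp only [Set.mem_ofPred_eq] at h h' ⊢
            rw [lie_add, h, h', smul_add]
          zero_mem' := by simp
          smul_mem' := by
            intro a m h
            simp only [Set.mem_ofPred_eq] at h ⊢
            have h1 : ⁅y, a • m⁆ = a • ⁅y, m⁆ := (kend y hy).map_smul a m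
            rw [h1, h, smul_comm] }
      have hE : W ≤ E := by
        by_contra hne
        have h3 : IsAtom (⊤ : Submodule A V) := hWt ▸ hW
        have h4 : E < ⊤ := lt_top_iff_ne_top.mpr (fun h => hne (h ▸ le_top))
        have h5 := h3.2 E h4
        have h6 : v ∈ E := by
          change ⁅y, v⁆ = c • v
          simpa using hv.apply_eq_smul
        rw [h5, Submodule.mem_bot] at h6
        exact hv.2 h6
      intro m
      exact hE (hWt ▸ Submodule.mem_top)
    have := hK.sup_eq_top
    rwa [hKb, sup_bot_eq] at this

open LieModule LieAlgebra in
theorem aux_Z {L V : Type*} [LieRing L] [LieAlgebra ℂ L] [Module.Finite ℂ L]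
    [AddCommGroup V] [Module ℂ V]
    [Module.Finite ℂ V] [LieRingModule L V] [LieModule ℂ L V]
    (hL : Module.finrank ℂ L = 13) (hV : Module.finrank ℂ V = 7)
    [LieModule.IsIrreducible ℂ L V]
    (hf : ∀ x : L, (∀ m : V, ⁅x, m⁆ = 0) → x = 0)
    (htr : ∀ x : L, LinearMap.trace ℂ V (toEnd ℂ L V x) = 0)
    (T : L →ₗ[ℂ] L) (hT : ∀ x y : L, T ⁅x, y⁆ = ⁅x, T y⁆) (htT : LinearMap.trace ℂ L T = 36)
    (β : LinearMap.BilinForm ℂ L)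
    (h1 : ∀ x y, traceForm ℂ L V x y = β (T x) y)
    (h2 : ∀ x y, killingForm ℂ L x y = 12 * β x y - 2 * traceForm ℂ L V x y) : False := by
  have hfa : LieModule.IsFaithful ℂ L V := (LieModule.isFaithful_iff' ℂ L V).mpr (fun x hx => hf x hx)
  have hrad : HasTrivialRadical ℂ L :=
    LieAlgebra.hasTrivialRadical_of_isIrreducible_of_isFaithful ℂ L V htr
  have hnt : Nontrivial L := Module.nontrivial_of_finrank_pos (R := ℂ) (by omega)
  obtain ⟨t, ht⟩ := Module.End.exists_eigenvalue T
  obtain ⟨v, hv⟩ := ht.exists_hasEigenvector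
  let J : LieIdeal ℂ L :=
    { Module.End.eigenspace T t with
      lie_mem := by
        intro x m hm
        have hm' : T m = t • m := Module.End.mem_eigenspace_iff.mp hm
        have : T ⁅x, m⁆ = t • ⁅x, m⁆ := by rw [hT, hm', lie_smul]
        exact Module.End.mem_eigenspace_iff.mpr this }
  have hJ : J = ⊤ := by
    refine (aux_X hV hf htr J).resolve_left (fun h => ?_)
    have : v ∈ J := hv.1
    rw [h, LieSubmodule.mem_bot] at this
    exact hv.2 this
  have hTt : ∀ x, T x = t • x := by
    intro x
    have : x ∈ J := by rw [hJ]; trivial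
    exact Module.End.mem_eigenspace_iff.mp this
  have hT' : T = t • LinearMap.id := by ext x; simpa using hTt x
  rw [hT', map_smul, LinearMap.trace_id, hL] at htT
  have htT' : t * 13 = 36 := by simpa using htT
  apply aux_Y (V := V) hL
  intro x
  rw [h2, h1, hTt]
  simp only [map_smul, LinearMap.smul_apply, smul_eq_mul]
  linear_combination (-β x x) * htT'

theorem aux_tr {g : Type*} [AddCommGroup g] [Module ℂ g] [Module.Finite ℂ g] {U : Submodule ℂ g}
    {P : g →ₗ[ℂ] g} (hP : LinearMap.IsProj U P) (F : g →ₗ[ℂ] g) (G : U →ₗ[ℂ] U)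
    (hFG : ∀ x : U, (G x : g) = F x) : LinearMap.trace ℂ U G = LinearMap.trace ℂ g (F ∘ₗ P) := by
  have h1 : ∀ x, (F ∘ₗ P) x ∈ U := by
    intro x
    have := hFG ⟨P x, hP.map_mem x⟩
    rw [LinearMap.comp_apply, ← this]
    exact Subtype.property _
  rw [← LinearMap.trace_restrict_eq_of_forall_mem U (F ∘ₗ P) h1]
  congr 1
  ext x
  rw [hFG]
  simp [hP.map_id x.1 x.2]

theorem aux_trsum {g : Type*} [AddCommGroup g] [Module ℂ g] [Module.Finite ℂ g]
    {ι : Type*} [Fintype ι] (P F : g →ₗ[ℂ] g) (φ : ι → (g →ₗ[ℂ] ℂ)) (v : ι → g)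
    (hP : ∀ x, P x = ∑ i, φ i x • v i) :
    LinearMap.trace ℂ g (F ∘ₗ P) = ∑ i, φ i (F (v i)) := by
  have h : F ∘ₗ P = ∑ i, (φ i).smulRight (F (v i)) := by
    ext x
    simp [hP]
  rw [h, map_sum]
  simp

open LieModule LieAlgebra in
theorem aux_case6 {g : Type*} [LieRing g] [LieAlgebra ℂ g] [Module.Finite ℂ g]
    (B : LinearMap.BilinForm ℂ g)
    (hsymm : ∀ x y : g, B x y = B y x)
    (hinv : ∀ x y z : g, B ⁅x, y⁆ z = B x ⁅y, z⁆)
    (hkill : ∀ x y : g, LieModule.traceForm ℂ g g x y = (12 : ℂ) * B x y)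
    {ι : Type*} [Fintype ι] (b bd : ι → g)
    (G0 G1 : Submodule ℂ g) (P0 P1 P2 : g →ₗ[ℂ] g)
    (hP : P0 + P1 + P2 = LinearMap.id)
    (hG0 : LinearMap.IsProj G0 P0) (hG1 : LinearMap.IsProj G1 P1)
    (h00 : ∀ x ∈ G0, ∀ y ∈ G0, ⁅x, y⁆ ∈ G0) (h01 : ∀ x ∈ G0, ∀ y ∈ G1, ⁅x, y⁆ ∈ G1)
    (hb : ∀ i, b i ∈ G1)
    (hP1 : ∀ x, P1 x = ∑ i, B (bd i) x • b i) (hP2 : ∀ x, P2 x = ∑ i, B (b i) x • bd i)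
    (htr0 : LinearMap.trace ℂ g P0 = 14) (hdim1 : Module.finrank ℂ G1 = 7)
    (h : g) (hh : h = ∑ i, ⁅b i, bd i⁆) (hh0 : h ∈ G0)
    (hhG0 : ∀ u ∈ G0, ⁅h, u⁆ = 0) (hhG1 : ∀ x ∈ G1, ⁅h, x⁆ = (6 : ℂ) • x)
    (hBh : B h h = 42)
    (C : g →ₗ[ℂ] g) (hC : ∀ x, C x = ∑ i, ⁅b i, ⁅bd i, x⁆⁆)
    (hC' : ∀ x, C x = ∑ i, ⁅bd i, ⁅b i, x⁆⁆ + ⁅h, x⁆)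
    (hC0 : ∀ u ∈ G0, C u ∈ G0)
    (hCc : ∀ u ∈ G0, ∀ x, C ⁅u, x⁆ = ⁅u, C x⁆)
    (htC : LinearMap.trace ℂ g (C ∘ₗ P0) = 42)
    (hfaith : ∀ u ∈ G0, (∀ x ∈ G1, ⁅u, x⁆ = 0) → u = 0)
    (hirr : ∀ U : Submodule ℂ g, U ≤ G1 → (∀ u ∈ G0, ∀ x ∈ U, ⁅u, x⁆ ∈ U) → U = ⊥ ∨ U = G1) :
    False := by
  have hCh : C h = (6 : ℂ) • h := by
    rw [hC', lie_self, add_zero]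
    have : ∀ i, ⁅bd i, ⁅b i, h⁆⁆ = (6 : ℂ) • ⁅b i, bd i⁆ := by
      intro i
      rw [← lie_skew (b i) h, hhG1 _ (hb i), ← lie_skew (b i) (bd i), lie_neg, lie_smul, smul_neg]
    rw [Finset.sum_congr rfl (fun i _ => this i), ← Finset.smul_sum, ← hh]
  -- the trace of `ad u ad v` on the degree one part
  have hCB : ∀ u v : g, LinearMap.trace ℂ g ((ad ℂ g u ∘ₗ ad ℂ g v) ∘ₗ P1) = B (C u) v := by
    intro u v
    rw [aux_trsum P1 _ (fun i => B (bd i)) b hP1, hC, map_sum, LinearMap.sum_apply]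
    refine Finset.sum_congr rfl fun i _ => ?_
    simp only [LinearMap.comp_apply, ad_apply]
    rw [← hinv, ← lie_skew v (b i), hsymm ⁅b i, _⁆, ← hinv, hsymm ⁅v, b i⁆]
    rw [← lie_skew v (b i)]
  have hCB2 : ∀ u v : g, LinearMap.trace ℂ g ((ad ℂ g u ∘ₗ ad ℂ g v) ∘ₗ P2) = B (C v) u := by
    intro u v
    rw [← hCB, aux_trsum P1 _ (fun i => B (bd i)) b hP1, aux_trsum P2 _ (fun i => B (b i)) bd hP2]
    refine Finset.sum_congr rfl fun i _ => ?_
    simp only [LinearMap.comp_apply, ad_apply]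
    rw [← hinv, ← hinv, hsymm _ (bd i), ← lie_skew ⁅b i, u⁆ v, ← lie_skew (b i) u, lie_neg, neg_neg]
  have hadj : ∀ u ∈ G0, ∀ v, B (C v) u = B v (C u) := by
    intro u hu v
    rw [hC v, hC' u, hhG0 u hu, add_zero, map_sum, map_sum, LinearMap.sum_apply]
    refine Finset.sum_congr rfl fun i _ => ?_
    rw [hsymm, ← hinv, ← hinv, hsymm _ v, ← lie_skew (bd i), ← lie_skew (b i) u]
    simp
  -- the subalgebra
  let s : LieSubalgebra ℂ g :=
    { G0 ⊓ LinearMap.ker (B h) with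
      lie_mem' := by
        rintro x y ⟨hx, hx'⟩ ⟨hy, hy'⟩
        refine ⟨h00 x hx y hy, ?_⟩
        change B h ⁅x, y⁆ = 0
        rw [← hinv, hhG0 x hx]; simp }
  have hs : ∀ x, x ∈ s ↔ x ∈ G0 ∧ B h x = 0 := fun x => Iff.rfl
  let Q : g →ₗ[ℂ] g := P0 - (1 / 42 : ℂ) • ((B h) ∘ₗ P0).smulRight h
  have hQ : LinearMap.IsProj s.toSubmodule Q := by
    constructor
    · intro x
      have : Q x = P0 x - (1 / 42 : ℂ) • B h (P0 x) • h := rfl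
      rw [this]
      refine (hs _).mpr ⟨sub_mem (hG0.map_mem x) (G0.smul_mem _ (G0.smul_mem _ hh0)), ?_⟩
      simp [hBh]
      ring
    · intro x hx
      have : Q x = P0 x - (1 / 42 : ℂ) • B h (P0 x) • h := rfl
      rw [this, hG0.map_id x hx.1]
      have h2 : B h x = 0 := hx.2
      simp [h2]
  have htrQ : ∀ F : g →ₗ[ℂ] g, LinearMap.trace ℂ g (F ∘ₗ Q) =
      LinearMap.trace ℂ g (F ∘ₗ P0) - (1 / 42) * B h (P0 (F h)) := by
    intro F
    have : F ∘ₗ Q = F ∘ₗ P0 - (1 / 42 : ℂ) • ((B h) ∘ₗ P0).smulRight (F h) := by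
      ext x; simp [Q]
    rw [this, map_sub, map_smul, LinearMap.trace_smulRight]
    simp
  have hdims : Module.finrank ℂ s = 13 := by
    have h1 := hQ.trace
    have h2 := htrQ LinearMap.id
    rw [LinearMap.id_comp, LinearMap.id_comp, h1, htr0, LinearMap.id_apply, hG0.map_id h hh0, hBh] at h2
    have h3 : (Module.finrank ℂ s.toSubmodule : ℂ) = (13 : ℕ) := by rw [h2]; norm_num
    exact_mod_cast h3
  let V : LieSubmodule ℂ s g :=
    { G1 with
      lie_mem := by
        intro u m hm
        exact h01 u.1 ((hs _).mp u.2).1 m hm }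
  have hVdim : Module.finrank ℂ V = 7 := hdim1
  have hG1V : LinearMap.IsProj V.toSubmodule P1 := hG1
  have hnt : Nontrivial V := Module.nontrivial_of_finrank_pos (R := ℂ) (by omega)
  have hirrV : LieModule.IsIrreducible ℂ s V := by
    refine LieModule.IsIrreducible.mk fun N hN => ?_
    let U : Submodule ℂ g := N.toSubmodule.map V.toSubmodule.subtype
    have hU : ∀ x, x ∈ U ↔ ∃ hx : x ∈ V, (⟨x, hx⟩ : V) ∈ N := by
      intro x
      constructor
      · rintro ⟨y, hy, rfl⟩
        exact ⟨y.2, hy⟩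
      · rintro ⟨hx, hxN⟩
        exact ⟨_, hxN, rfl⟩
    have hU1 : U ≤ G1 := fun x hx => ((hU _).mp hx).1
    have hU2 : ∀ u ∈ G0, ∀ x ∈ U, ⁅u, x⁆ ∈ U := by
      intro u hu x hx
      obtain ⟨hxV, hxN⟩ := (hU _).mp hx
      have hus : u - ((1 / 42 : ℂ) * B h u) • h ∈ s := by
        refine (hs _).mpr ⟨sub_mem hu (G0.smul_mem _ hh0), ?_⟩
        simp [hBh]
        try ring
      have h2 : ⁅u - ((1 / 42 : ℂ) * B h u) • h, x⁆ ∈ U :=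
        (hU _).mpr ⟨_, N.lie_mem (x := ⟨_, hus⟩) hxN⟩
      have h3 : ⁅u, x⁆ = ⁅u - ((1 / 42 : ℂ) * B h u) • h, x⁆ + ((1 / 42 : ℂ) * B h u) • (6 : ℂ) • x := by
        rw [sub_lie, smul_lie, hhG1 x hxV]; abel
      rw [h3]
      exact add_mem h2 (U.smul_mem _ (U.smul_mem _ hx))
    rcases hirr U hU1 hU2 with h1 | h1
    · exfalso
      apply hN
      rw [LieSubmodule.eq_bot_iff]
      intro m hm
      have : (m : g) ∈ U := (hU _).mpr ⟨m.2, hm⟩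
      rw [h1, Submodule.mem_bot] at this
      exact Subtype.ext this
    · rw [eq_top_iff]
      intro m _
      have : (m : g) ∈ U := by rw [h1]; exact m.2
      exact ((hU _).mp this).2
  let T : s →ₗ[ℂ] s := C.restrict (p := s.toSubmodule) (q := s.toSubmodule) (by
    intro u hu
    have hu' := (hs u).mp hu
    refine (hs _).mpr ⟨hC0 u hu'.1, ?_⟩
    rw [← hadj u hu'.1, hCh]; simp [hu'.2])
  have hTF : ∀ u v : s, traceForm ℂ s V u v = B (C u) v := by
    intro u v
    rw [← hCB, traceForm_apply_apply]
    exact aux_tr hG1V _ _ (fun x => rfl)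
  refine aux_Z (L := s) (V := V) hdims hVdim ?_ ?_ T ?_ ?_ (B.restrict s.toSubmodule) ?_ ?_
  · intro u hu
    apply Subtype.ext
    refine hfaith u.1 ((hs _).mp u.2).1 fun x hx => ?_
    exact congrArg Subtype.val (hu ⟨x, hx⟩)
  · intro u
    have h1 : LinearMap.trace ℂ V (toEnd ℂ s V u) = LinearMap.trace ℂ g (ad ℂ g u ∘ₗ P1) :=
      aux_tr hG1V (ad ℂ g u) (toEnd ℂ s V u) (fun x => rfl)
    rw [h1, aux_trsum P1 _ (fun i => B (bd i)) b hP1]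
    have : B h u = 0 := ((hs _).mp u.2).2
    rw [hh, map_sum, LinearMap.sum_apply] at this
    rw [← this]
    refine Finset.sum_congr rfl fun i _ => ?_
    rw [ad_apply, hsymm ⁅b i, bd i⁆, ← hinv (u : g), hsymm (bd i)]
  · intro x y
    apply Subtype.ext
    exact hCc x.1 ((hs _).mp x.2).1 y.1
  · have h1 : LinearMap.trace ℂ s T = LinearMap.trace ℂ g (C ∘ₗ Q) := aux_tr hQ C T (fun x => rfl)
    rw [h1, htrQ, htC, hCh, map_smul, hG0.map_id h hh0, map_smul, hBh]
    norm_num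
  · intro x y
    rw [hTF]; rfl
  · intro u v
    have hu := ((hs _).mp u.2).1
    have hv := ((hs _).mp v.2).1
    have h1 : killingForm ℂ s u v = LinearMap.trace ℂ g ((ad ℂ g u ∘ₗ ad ℂ g v) ∘ₗ Q) := by
      rw [killingForm_apply_apply]
      exact aux_tr hQ (ad ℂ g u ∘ₗ ad ℂ g v) (ad ℂ s u ∘ₗ ad ℂ s v) (fun x => rfl)
    have h2 : (ad ℂ g u ∘ₗ ad ℂ g v) h = 0 := by
      simp only [LinearMap.comp_apply, ad_apply]
      rw [← lie_skew (v : g) h, hhG0 v.1 hv]; simp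
    have h3 : LinearMap.trace ℂ g ((ad ℂ g u ∘ₗ ad ℂ g v) ∘ₗ P0) =
        12 * B u v - B (C u) v - B (C v) u := by
      rw [← hCB, ← hCB2, ← hkill, traceForm_apply_apply]
      have h4 : P0 = LinearMap.id - P1 - P2 := by rw [← hP]; abel
      rw [h4, LinearMap.comp_sub, LinearMap.comp_sub, LinearMap.comp_id, map_sub, map_sub]
      rfl
    rw [h1, htrQ, h2, h3, hTF, hadj u.1 hu]
    have h5 : B.restrict s.toSubmodule u v = B u v := rfl
    rw [h5, hsymm v.1 (C u.1), map_zero, map_zero]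
    ring

theorem aux_cas {g : Type*} [LieRing g] [LieAlgebra ℂ g]
    (B : LinearMap.BilinForm ℂ g)
    (hsymm : ∀ x y : g, B x y = B y x)
    (hinv : ∀ x y z : g, B ⁅x, y⁆ z = B x ⁅y, z⁆)
    {ι : Type*} [Fintype ι] (b bd : ι → g) (u : g)
    (h1 : ∀ i, ⁅u, b i⁆ = ∑ j, B (bd j) ⁅u, b i⁆ • b j)
    (h2 : ∀ i, ⁅u, bd i⁆ = ∑ j, B (b j) ⁅u, bd i⁆ • bd j)
    (φ : g →ₗ[ℂ] g →ₗ[ℂ] g) :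
    ∑ i, (φ ⁅u, b i⁆ (bd i) + φ (b i) ⁅u, bd i⁆) = 0 := by
  have e1 : ∀ i, φ ⁅u, b i⁆ (bd i) = ∑ j, B (bd j) ⁅u, b i⁆ • φ (b j) (bd i) := by
    intro i
    conv_lhs => rw [h1 i]
    simp
  have e2 : ∀ i, φ (b i) ⁅u, bd i⁆ = ∑ j, B (b j) ⁅u, bd i⁆ • φ (b i) (bd j) := by
    intro i
    conv_lhs => rw [h2 i]
    simp
  simp_rw [e1, e2]
  rw [Finset.sum_add_distrib, Finset.sum_comm, ← Finset.sum_add_distrib]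
  refine Finset.sum_eq_zero fun i _ => ?_
  rw [← Finset.sum_add_distrib]
  refine Finset.sum_eq_zero fun j _ => ?_
  rw [← add_smul]
  have : B (bd i) ⁅u, b j⁆ + B (b j) ⁅u, bd i⁆ = 0 := by
    rw [← hinv (bd i), hsymm (b j), ← lie_skew u (bd i), map_neg, LinearMap.neg_apply, add_neg_cancel]
  rw [this, zero_smul]

open LieModule LieAlgebra in
theorem aux_final {g : Type*} [LieRing g] [LieAlgebra ℂ g] [Module.Finite ℂ g]
    [LieAlgebra.IsSimple ℂ g]
    (B : LinearMap.BilinForm ℂ g)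
    (hsymm : ∀ x y : g, B x y = B y x)
    (hinv : ∀ x y z : g, B ⁅x, y⁆ z = B x ⁅y, z⁆)
    (hkill : ∀ x y : g, LieModule.traceForm ℂ g g x y = (12 : ℂ) * B x y)
    (hnd : ∀ x, (∀ y, B x y = 0) → x = 0)
    (hdim : Module.finrank ℂ g = 28)
    {ι : Type*} [Fintype ι] [DecidableEq ι] (b bd : ι → g)
    (G0 G1 G2 : Submodule ℂ g) (P0 P1 P2 : g →ₗ[ℂ] g)
    (hP : P0 + P1 + P2 = LinearMap.id)
    (hG0 : LinearMap.IsProj G0 P0) (hG1 : LinearMap.IsProj G1 P1) (hG2 : LinearMap.IsProj G2 P2)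
    (hd01 : Disjoint G0 G1)
    (h00 : ∀ x ∈ G0, ∀ y ∈ G0, ⁅x, y⁆ ∈ G0) (h01 : ∀ x ∈ G0, ∀ y ∈ G1, ⁅x, y⁆ ∈ G1)
    (h02 : ∀ x ∈ G0, ∀ y ∈ G2, ⁅x, y⁆ ∈ G2) (h12 : ∀ x ∈ G1, ∀ y ∈ G2, ⁅x, y⁆ ∈ G0)
    (h11 : ∀ x ∈ G1, ∀ y ∈ G1, ⁅x, y⁆ ∈ G2) (h22 : ∀ x ∈ G2, ∀ y ∈ G2, ⁅x, y⁆ ∈ G1)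
    (B01 : ∀ x ∈ G0, ∀ y ∈ G1, B x y = 0) (B02 : ∀ x ∈ G0, ∀ y ∈ G2, B x y = 0)
    (B11 : ∀ x ∈ G1, ∀ y ∈ G1, B x y = 0) (B22 : ∀ x ∈ G2, ∀ y ∈ G2, B x y = 0)
    (hPad : ∀ x ∈ G1, P0 ∘ₗ ad ℂ g x = ad ℂ g x ∘ₗ P2)
    (hb : ∀ i, b i ∈ G1) (hbd : ∀ i, bd i ∈ G2)
    (hspan : ∀ x ∈ G1, x ∈ Submodule.span ℂ (Set.range b))
    (hdual : ∀ i j, B (b i) (bd j) = if i = j then (1 : ℂ) else 0)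
    (hdim1 : Module.finrank ℂ G1 = 7)
    (hirr : ∀ U : Submodule ℂ g, U ≤ G1 → (∀ u ∈ G0, ∀ x ∈ U, ⁅u, x⁆ ∈ U) → U = ⊥ ∨ U = G1) :
    ∀ x ∈ G1, ∑ i, ⁅b i, ⁅bd i, x⁆⁆ = (4 : ℂ) • x := by
  have hPx : ∀ x, x = P0 x + P1 x + P2 x := fun x => by
    have := congrArg (fun f : g →ₗ[ℂ] g => f x) hP
    simpa using this.symm
  have hm0 := hG0.map_mem
  have hm1 := hG1.map_mem
  have hm2 := hG2.map_mem
  have hB1 : ∀ x ∈ G1, ∀ y, B x y = B x (P2 y) := by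
    intro x hx y
    conv_lhs => rw [hPx y]
    rw [map_add, map_add, B11 x hx _ (hm1 y), hsymm x, B01 _ (hm0 y) x hx]; simp
  have hB2 : ∀ x ∈ G2, ∀ y, B x y = B x (P1 y) := by
    intro x hx y
    conv_lhs => rw [hPx y]
    rw [map_add, map_add, B22 x hx _ (hm2 y), hsymm x, B02 _ (hm0 y) x hx]; simp
  have hB0 : ∀ x ∈ G0, ∀ y, B x y = B x (P0 y) := by
    intro x hx y
    conv_lhs => rw [hPx y]
    rw [map_add, map_add, B01 x hx _ (hm1 y), B02 x hx _ (hm2 y)]; simp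
  have hsp' : ∀ x ∈ Submodule.span ℂ (Set.range b), x = ∑ i, B (bd i) x • b i := by
    intro x h
    induction h using Submodule.span_induction with
    | mem x h =>
      obtain ⟨j, rfl⟩ := h
      simp [hsymm (bd _), hdual]
    | zero => simp
    | add x y _ _ h1 h2 =>
      simp only [map_add, add_smul, Finset.sum_add_distrib]
      rw [← h1, ← h2]
    | smul a x _ h =>
      simp only [map_smul, smul_eq_mul, mul_smul]
      rw [← Finset.smul_sum, ← h]
  have hP1 : ∀ x, P1 x = ∑ i, B (bd i) x • b i := by
    intro x
    rw [hsp' _ (hspan _ (hm1 x))]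
    exact Finset.sum_congr rfl fun i _ => by rw [← hB2 _ (hbd i)]
  have hz2 : ∀ d ∈ G2, (∀ w ∈ G1, B d w = 0) → d = 0 := by
    intro d hd h
    refine hnd d fun y => ?_
    rw [hB2 d hd]
    exact h _ (hm1 y)
  have hP2 : ∀ x, P2 x = ∑ i, B (b i) x • bd i := by
    intro x
    rw [← sub_eq_zero]
    refine hz2 _ (sub_mem (hm2 x) (Submodule.sum_mem _ fun i _ => G2.smul_mem _ (hbd i))) ?_
    intro w hw
    rw [hsp' _ (hspan w hw), map_sum]
    refine Finset.sum_eq_zero fun j _ => ?_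
    rw [map_smul, map_sub, LinearMap.sub_apply, hsymm (P2 x), ← hB1 _ (hb j)]
    simp [hsymm (bd _) (b _), hdual]
  have hmem1 : ∀ x ∈ G1, x = ∑ i, B (bd i) x • b i := fun x hx => hsp' x (hspan x hx)
  have hmem2 : ∀ x ∈ G2, x = ∑ i, B (b i) x • bd i := fun x hx => by
    rw [← hP2, hG2.map_id x hx]
  have ht1 : LinearMap.trace ℂ g P1 = 7 := by rw [hG1.trace, hdim1]; norm_num
  have hcard : (Fintype.card ι : ℂ) = 7 := by
    have := aux_trsum P1 LinearMap.id (fun i => B (bd i)) b hP1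
    rw [LinearMap.id_comp, ht1] at this
    simpa [hsymm (bd _), hdual] using this.symm
  have ht2 : LinearMap.trace ℂ g P2 = 7 := by
    have := aux_trsum P2 LinearMap.id (fun i => B (b i)) bd hP2
    rw [LinearMap.id_comp] at this
    rw [this]
    simpa [hdual] using hcard
  have htrF : ∀ F : g →ₗ[ℂ] g, LinearMap.trace ℂ g F = LinearMap.trace ℂ g (F ∘ₗ P0)
      + LinearMap.trace ℂ g (F ∘ₗ P1) + LinearMap.trace ℂ g (F ∘ₗ P2) := by
    intro F
    rw [← map_add, ← map_add, ← LinearMap.comp_add, ← LinearMap.comp_add, hP, LinearMap.comp_id]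
  have ht0 : LinearMap.trace ℂ g P0 = 14 := by
    have := htrF LinearMap.id
    simp only [LinearMap.id_comp] at this
    rw [LinearMap.trace_id, hdim, ht1, ht2] at this
    push_cast at this
    linear_combination -this
  obtain ⟨h, hh⟩ : ∃ h, h = ∑ i, ⁅b i, bd i⁆ := ⟨_, rfl⟩
  have hh0 : h ∈ G0 := by
    rw [hh]; exact Submodule.sum_mem _ fun i _ => h12 _ (hb i) _ (hbd i)
  obtain ⟨C, hCdef⟩ : ∃ C : g →ₗ[ℂ] g, C = ∑ i, ad ℂ g (b i) ∘ₗ ad ℂ g (bd i) := ⟨_, rfl⟩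
  obtain ⟨D, hDdef⟩ : ∃ D : g →ₗ[ℂ] g, D = ∑ i, ad ℂ g (bd i) ∘ₗ ad ℂ g (b i) := ⟨_, rfl⟩
  have hC : ∀ x, C x = ∑ i, ⁅b i, ⁅bd i, x⁆⁆ := fun x => by simp [hCdef]
  have hD : ∀ x, D x = ∑ i, ⁅bd i, ⁅b i, x⁆⁆ := fun x => by simp [hDdef]
  have hC' : ∀ x, C x = ∑ i, ⁅bd i, ⁅b i, x⁆⁆ + ⁅h, x⁆ := by
    intro x
    rw [hC, hh, sum_lie, ← Finset.sum_add_distrib]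
    exact Finset.sum_congr rfl fun i _ => by rw [leibniz_lie (b i) (bd i) x, add_comm]
  have hcas : ∀ u ∈ G0, ∀ φ : g →ₗ[ℂ] g →ₗ[ℂ] g,
      ∑ i, (φ ⁅u, b i⁆ (bd i) + φ (b i) ⁅u, bd i⁆) = 0 := fun u hu φ =>
    aux_cas B hsymm hinv b bd u (fun i => hmem1 _ (h01 u hu _ (hb i)))
      (fun i => hmem2 _ (h02 u hu _ (hbd i))) φ
  have hCc : ∀ u ∈ G0, ∀ x, C ⁅u, x⁆ = ⁅u, C x⁆ := by
    intro u hu x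
    have h1 := hcas u hu (LinearMap.mk₂ ℂ (fun a c => ⁅a, ⁅c, x⁆⁆) (by simp) (by simp) (by simp)
      (by simp))
    simp only [LinearMap.mk₂_apply] at h1
    rw [hC, hC, lie_sum]
    rw [← sub_eq_zero, ← neg_eq_zero, neg_sub, ← Finset.sum_sub_distrib, ← h1]
    refine Finset.sum_congr rfl fun i _ => ?_
    rw [leibniz_lie u (b i), leibniz_lie u (bd i), lie_add]
    abel
  have hhG0 : ∀ u ∈ G0, ⁅h, u⁆ = 0 := by
    intro u hu
    have h1 := hcas u hu (LinearMap.mk₂ ℂ (fun a c => ⁅a, c⁆) (by simp) (by simp) (by simp)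
      (by simp))
    simp only [LinearMap.mk₂_apply] at h1
    rw [← lie_skew, neg_eq_zero, hh, lie_sum, ← h1]
    exact Finset.sum_congr rfl fun i _ => by rw [leibniz_lie u (b i)]
  have hschur : ∀ F : g →ₗ[ℂ] g, (∀ x ∈ G1, F x ∈ G1) → (∀ u ∈ G0, ∀ x, F ⁅u, x⁆ = ⁅u, F x⁆) →
      ∃ c : ℂ, ∀ x ∈ G1, F x = c • x := by
    intro F hF hFu
    have hnt : Nontrivial G1 := Module.nontrivial_of_finrank_pos (R := ℂ) (by omega)
    obtain ⟨c, hc⟩ := Module.End.exists_eigenvalue (F.restrict hF)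
    obtain ⟨v, hv⟩ := hc.exists_hasEigenvector
    refine ⟨c, ?_⟩
    have hU2 : ∀ u ∈ G0, ∀ x ∈ G1 ⊓ Module.End.eigenspace F c,
        ⁅u, x⁆ ∈ G1 ⊓ Module.End.eigenspace F c := by
      rintro u hu x ⟨hx, hx2⟩
      refine ⟨h01 u hu x hx, ?_⟩
      rw [SetLike.mem_coe, Module.End.mem_eigenspace_iff] at hx2 ⊢
      rw [hFu u hu, hx2, lie_smul]
    rcases hirr (G1 ⊓ Module.End.eigenspace F c) inf_le_left hU2 with h1 | h1
    · exfalso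
      apply hv.2
      have h2 : (v : g) ∈ G1 ⊓ Module.End.eigenspace F c := by
        refine ⟨v.2, ?_⟩
        have := congrArg Subtype.val hv.apply_eq_smul
        exact Module.End.mem_eigenspace_iff.mpr this
      rw [h1, Submodule.mem_bot] at h2
      exact Subtype.ext h2
    · intro x hx
      rw [← h1] at hx
      exact Module.End.mem_eigenspace_iff.mp hx.2
  have h20 : ∀ x ∈ G2, ∀ y ∈ G0, ⁅x, y⁆ ∈ G2 := fun x hx y hy => by
    rw [← lie_skew]; exact neg_mem (h02 y hy x hx)
  have h10 : ∀ x ∈ G1, ∀ y ∈ G0, ⁅x, y⁆ ∈ G1 := fun x hx y hy => by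
    rw [← lie_skew]; exact neg_mem (h01 y hy x hx)
  have h21 : ∀ x ∈ G2, ∀ y ∈ G1, ⁅x, y⁆ ∈ G0 := fun x hx y hy => by
    rw [← lie_skew]; exact neg_mem (h12 y hy x hx)
  obtain ⟨c1, hc1⟩ := hschur C (fun x hx => by
    rw [hC]; exact Submodule.sum_mem _ fun i _ => h10 _ (hb i) _ (h21 _ (hbd i) _ hx)) hCc
  obtain ⟨c, hc⟩ := hschur (ad ℂ g h) (fun x hx => h01 h hh0 x hx) (fun u hu x => by
    rw [ad_apply, ad_apply, leibniz_lie, hhG0 u hu, zero_lie, zero_add])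
  simp only [ad_apply] at hc
  have hDB : ∀ y w, B (D y) w = B y (C w) := by
    intro y w
    rw [hD, hC, map_sum, map_sum, LinearMap.sum_apply]
    refine Finset.sum_congr rfl fun i _ => ?_
    rw [← lie_skew (bd i), map_neg, LinearMap.neg_apply, hinv, ← lie_skew (b i) y, map_neg,
      LinearMap.neg_apply, neg_neg, hinv]
  have hc2 : ∀ y ∈ G2, ⁅h, y⁆ = (-c) • y := by
    intro y hy
    rw [← sub_eq_zero]
    refine hz2 _ (sub_mem (h02 h hh0 y hy) (G2.smul_mem _ hy)) fun w hw => ?_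
    rw [← lie_skew, map_sub, LinearMap.sub_apply, map_neg, LinearMap.neg_apply, hinv, hc w hw]
    simp
  have hD2 : ∀ y ∈ G2, D y = c1 • y := by
    intro y hy
    rw [← sub_eq_zero]
    refine hz2 _ (sub_mem ?_ (G2.smul_mem _ hy)) fun w hw => ?_
    · rw [hD]; exact Submodule.sum_mem _ fun i _ => h20 _ (hbd i) _ (h12 _ (hb i) _ hy)
    · rw [map_sub, LinearMap.sub_apply, hDB, hc1 w hw]; simp
  have hC2 : ∀ y ∈ G2, C y = (c1 - c) • y := by
    intro y hy
    rw [hC', ← hD, hD2 y hy, hc2 y hy, ← add_smul, sub_eq_add_neg]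
  have hscal : ∀ (F : g →ₗ[ℂ] g) (U : Submodule ℂ g) (P : g →ₗ[ℂ] g) (a : ℂ), (∀ x, P x ∈ U) →
      (∀ x ∈ U, F x = a • x) → LinearMap.trace ℂ g (F ∘ₗ P) = a * LinearMap.trace ℂ g P := by
    intro F U P a hPU hFU
    have : F ∘ₗ P = a • P := by
      ext x; simp [hFU _ (hPU x)]
    rw [this, map_smul, smul_eq_mul]
  have htC0 : LinearMap.trace ℂ g (C ∘ₗ P0) = 7 * c1 := by
    have hsc : ∀ (f : ι → g →ₗ[ℂ] g) (P : g →ₗ[ℂ] g), (∑ i, f i) ∘ₗ P = ∑ i, f i ∘ₗ P := by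
      intro f P
      ext x
      simp
    have h1 : LinearMap.trace ℂ g (C ∘ₗ P0) = LinearMap.trace ℂ g (D ∘ₗ P2) := by
      rw [hCdef, hDdef, hsc, hsc, map_sum, map_sum]
      refine Finset.sum_congr rfl fun i _ => ?_
      rw [LinearMap.comp_assoc, LinearMap.trace_comp_comm', LinearMap.comp_assoc, hPad _ (hb i),
        LinearMap.comp_assoc]
    rw [h1, hscal D G2 P2 c1 hm2 hD2, ht2]; ring
  have htC : LinearMap.trace ℂ g C = 84 := by
    rw [hCdef, map_sum]
    have : ∀ i, LinearMap.trace ℂ g (ad ℂ g (b i) ∘ₗ ad ℂ g (bd i)) = 12 := by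
      intro i
      have := hkill (b i) (bd i)
      rw [hdual, if_pos rfl, mul_one, traceForm_apply_apply] at this
      exact this
    rw [Finset.sum_congr rfl fun i _ => this i, Finset.sum_const, nsmul_eq_mul, Finset.card_univ,
      hcard]
    norm_num
  have heq1 : 21 * c1 - 7 * c = 84 := by
    have := htrF C
    rw [htC, htC0, hscal C G1 P1 c1 hm1 hc1, hscal C G2 P2 _ hm2 hC2, ht1, ht2] at this
    linear_combination -this
  have hBh : B h h = 7 * c := by
    have h1 : B h h = ∑ i, B h ⁅b i, bd i⁆ := by rw [← map_sum, ← hh]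
    rw [h1]
    have : ∀ i, B h ⁅b i, bd i⁆ = c := by
      intro i
      rw [← hinv, hc _ (hb i), map_smul, LinearMap.smul_apply, hdual, if_pos rfl, smul_eq_mul, mul_one]
    rw [Finset.sum_congr rfl fun i _ => this i, Finset.sum_const, nsmul_eq_mul, Finset.card_univ,
      hcard]
  have heq2 : 14 * c ^ 2 = 84 * c := by
    have h1 := hkill h h
    have h2 : traceForm ℂ g g h h = LinearMap.trace ℂ g (ad ℂ g h ∘ₗ ad ℂ g h) := rfl
    rw [h2, htrF, hscal _ G0 P0 0 hm0, hscal _ G1 P1 (c ^ 2) hm1, hscal _ G2 P2 (c ^ 2) hm2, ht0,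
      ht1, ht2, hBh] at h1
    · linear_combination h1
    · intro x hx
      simp only [LinearMap.comp_apply, ad_apply]
      rw [hc2 x hx, lie_smul, hc2 x hx, smul_smul]; congr 1; ring
    · intro x hx
      simp only [LinearMap.comp_apply, ad_apply]
      rw [hc x hx, lie_smul, hc x hx, smul_smul]; congr 1; ring
    · intro x hx
      simp only [LinearMap.comp_apply, ad_apply]
      rw [hhG0 x hx, lie_zero, zero_smul]
  have heq3 : c * (c - 6) = 0 := by linear_combination heq2 / 14
  rcases mul_eq_zero.mp heq3 with h0 | h6
  · intro x hx
    rw [← hC, hc1 x hx]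
    congr 1
    rw [h0] at heq1
    linear_combination heq1 / 21
  · exfalso
    have hc6 : c = 6 := sub_eq_zero.mp h6
    subst hc6
    have hc16 : c1 = 6 := by linear_combination heq1 / 21
    have hfaith : ∀ u ∈ G0, (∀ x ∈ G1, ⁅u, x⁆ = 0) → u = 0 := by
      let I : LieIdeal ℂ g :=
        { carrier := {u | u ∈ G0 ∧ (∀ x ∈ G1, ⁅u, x⁆ = 0) ∧ (∀ x ∈ G2, ⁅u, x⁆ = 0)}
          add_mem' := by
            rintro u v ⟨h1, h2, h3⟩ ⟨h4, h5, h6⟩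
            exact ⟨add_mem h1 h4, fun x hx => by rw [add_lie, h2 x hx, h5 x hx, add_zero],
              fun x hx => by rw [add_lie, h3 x hx, h6 x hx, add_zero]⟩
          zero_mem' := ⟨zero_mem _, by simp, by simp⟩
          smul_mem' := by
            rintro a u ⟨h1, h2, h3⟩
            exact ⟨G0.smul_mem _ h1, fun x hx => by rw [smul_lie, h2 x hx, smul_zero],
              fun x hx => by rw [smul_lie, h3 x hx, smul_zero]⟩
          lie_mem := by
            rintro a u ⟨h1, h2, h3⟩
            have e : ⁅a, u⁆ = ⁅P0 a, u⁆ := by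
              conv_lhs => rw [hPx a]
              rw [add_lie, add_lie, ← lie_skew (P1 a), ← lie_skew (P2 a), h2 _ (hm1 a), h3 _ (hm2 a)]
              simp
            rw [e]
            refine ⟨h00 _ (hm0 a) u h1, fun x hx => ?_, fun x hx => ?_⟩
            · rw [lie_lie, h2 x hx, h2 _ (h01 _ (hm0 a) x hx)]; simp
            · rw [lie_lie, h3 x hx, h3 _ (h02 _ (hm0 a) x hx)]; simp }
      have hI : I = ⊥ := by
        rcases LieAlgebra.IsSimple.eq_bot_or_eq_top (R := ℂ) I with h1 | h1
        · exact h1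
        · exfalso
          have h2 : G1 ≤ G0 := by
            intro x _
            have : x ∈ I := by rw [h1]; exact LieSubmodule.mem_top x
            exact this.1
          have h3 : G1 = ⊥ := by
            have := hd01.symm
            exact disjoint_self.mp (this.mono_right h2)
          rw [h3] at hdim1
          simp at hdim1
      intro u hu hu1
      have : u ∈ I := by
        refine ⟨hu, hu1, fun y hy => hz2 _ (h02 u hu y hy) fun w hw => ?_⟩
        rw [← lie_skew, map_neg, LinearMap.neg_apply, hinv, hu1 w hw]; simp
      rw [hI] at this
      simpa using this
    exact aux_case6 B hsymm hinv hkill b bd G0 G1 P0 P1 P2 hP hG0 hG1 h00 h01 hb hP1 hP2 ht0 hdim1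
      h hh hh0 hhG0 hc (by rw [hBh]; norm_num) C hC hC' (fun u hu => by
        rw [hC]; exact Submodule.sum_mem _ fun i _ => h12 _ (hb i) _ (h20 _ (hbd i) _ hu)) hCc
      (by rw [htC0, hc16]; norm_num) hfaith hirr

open LieModule LieAlgebra in
theorem aux_Binv {g : Type*} [LieRing g] [LieAlgebra ℂ g] [Module.Finite ℂ g]
    (σ : g →ₗ⁅ℂ⁆ g) (h3 : ∀ x, σ (σ (σ x)) = x)
    (B : LinearMap.BilinForm ℂ g)
    (hkill : ∀ x y : g, LieModule.traceForm ℂ g g x y = (12 : ℂ) * B x y) (x y : g) :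
    B (σ x) (σ y) = B x y := by
  have h1 : traceForm ℂ g g (σ x) (σ y) = traceForm ℂ g g x y := by
    have e1 : traceForm ℂ g g (σ x) (σ y) =
        LinearMap.trace ℂ g (ad ℂ g (σ x) ∘ₗ ad ℂ g (σ y)) := rfl
    have e2 : traceForm ℂ g g x y =
        LinearMap.trace ℂ g (ad ℂ g x ∘ₗ ad ℂ g y) := rfl
    have e3 : ad ℂ g (σ x) ∘ₗ ad ℂ g (σ y) =
        σ.toLinearMap ∘ₗ ((ad ℂ g x ∘ₗ ad ℂ g y) ∘ₗ (σ.toLinearMap ∘ₗ σ.toLinearMap)) := by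
      ext z
      simp [h3]
    have e4 : (σ.toLinearMap ∘ₗ σ.toLinearMap) ∘ₗ σ.toLinearMap = LinearMap.id := by
      ext z
      simp [h3]
    rw [e1, e2, e3, LinearMap.trace_comp_comm', LinearMap.comp_assoc, e4, LinearMap.comp_id]
  rw [hkill, hkill] at h1
  exact mul_left_cancel₀ (by norm_num) h1

/-- `g` of type `D₄` (`so₈(ℂ)`) with the order-3 triality automorphism
`σ`, whose fixed algebra is of type `G₂`.  The type-`D₄` normalization is recorded by
the Killing form identity `κ = 2ȟ·B = 12·B` (dual Coxeter number `ȟ = 6`), and the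
`7`-dimensional `ε`-eigenspace `g₁` is an irreducible module over the fixed subalgebra
`g^σ`.  With dual bases `{b}` of `g₁` and `{b̌}` of `g₂` with respect to the normalized
invariant form `B`, the partial Casimir operator `C₁ = Σ_b ad_b ad_{b̌}` acts on `g₁`
by the scalar `4 = 2ȟ/3`. -/
theorem stmt18 {g : Type*} [LieRing g] [LieAlgebra ℂ g]
    [Module.Finite ℂ g] [LieAlgebra.IsSimple ℂ g]
    (ε : ℂ) (hε : IsPrimitiveRoot ε 3)
    (σ : g →ₗ⁅ℂ⁆ g) (hord : σ.toLinearMap ^ 3 = 1)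
    (B : LinearMap.BilinForm ℂ g)
    (hsymm : ∀ x y : g, B x y = B y x)
    (hinv : ∀ x y z : g, B ⁅x, y⁆ z = B x ⁅y, z⁆)
    (hkill : ∀ x y : g, LieModule.traceForm ℂ g g x y = (12 : ℂ) * B x y)
    (hdim : Module.finrank ℂ g = 28)
    (ι₁ : Type*) [Fintype ι₁] [DecidableEq ι₁] (b bd : ι₁ → g)
    (hbgr : ∀ i, σ (b i) = ε • b i)
    (hbdgr : ∀ i, σ (bd i) = ε ^ 2 • bd i)
    (hspan : ∀ x : g, σ x = ε • x → x ∈ Submodule.span ℂ (Set.range b))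
    (hdual : ∀ i j, B (b i) (bd j) = if i = j then (1 : ℂ) else 0)
    (hdim₁ : Module.finrank ℂ (Module.End.eigenspace σ.toLinearMap ε) = 7)
    (hirr : ∀ U : Submodule ℂ g, U ≤ Module.End.eigenspace σ.toLinearMap ε →
      (∀ u : g, σ u = u → ∀ x ∈ U, ⁅u, x⁆ ∈ U) →
      U = ⊥ ∨ U = Module.End.eigenspace σ.toLinearMap ε) :
    ∀ x : g, σ x = ε • x →
      ∑ i, ⁅b i, ⁅bd i, x⁆⁆ = ((2 * 6 / 3 : ℂ)) • x := by
  have h3 : ∀ x, σ (σ (σ x)) = x := fun x => by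
    have := congrArg (fun f : g →ₗ[ℂ] g => f x) hord
    simpa [pow_succ] using this
  have hε3 : ε ^ 3 = 1 := hε.pow_eq_one
  have hε1 : ε ≠ 1 := hε.ne_one (by norm_num)
  have hεs : ε ^ 2 + ε + 1 = 0 := by
    have h1 : (ε - 1) * (ε ^ 2 + ε + 1) = 0 := by linear_combination hε3
    exact (mul_eq_zero.mp h1).resolve_left (sub_ne_zero.mpr hε1)
  have hε2 : ε ^ 2 ≠ 1 := by
    intro h
    apply hε1
    linear_combination hε3 - ε * h
  have hBσ := aux_Binv σ h3 B hkill
  have hnd : ∀ x, (∀ y, B x y = 0) → x = 0 := by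
    intro x hx
    have h1 := LieAlgebra.IsKilling.ker_killingForm_eq_bot ℂ g
    have h2 : x ∈ LinearMap.ker (killingForm ℂ g) := by
      rw [LinearMap.mem_ker]
      ext y
      have := hkill x y
      rw [hx y, mul_zero] at this
      exact this
    rw [h1] at h2
    simpa using h2
  have horth : ∀ a c : ℂ, a * c ≠ 1 → ∀ x y, σ x = a • x → σ y = c • y → B x y = 0 := by
    intro a c hac x y hx hy
    have h1 := hBσ x y
    rw [hx, hy, map_smul, map_smul, LinearMap.smul_apply, smul_eq_mul, smul_eq_mul] at h1
    have h2 : (a * c - 1) * B x y = 0 := by linear_combination h1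
    exact (mul_eq_zero.mp h2).resolve_left (sub_ne_zero.mpr hac)
  have hbr : ∀ a c : ℂ, ∀ x y, σ x = a • x → σ y = c • y → σ ⁅x, y⁆ = (a * c) • ⁅x, y⁆ := by
    intro a c x y hx hy
    rw [LieHom.map_lie, hx, hy, smul_lie, lie_smul, smul_smul]
  obtain ⟨P, hPdef⟩ : ∃ P : ℂ → (g →ₗ[ℂ] g), ∀ a x, P a x =
      (1 / 3 : ℂ) • (x + a ^ 2 • σ x + a • σ (σ x)) :=
    ⟨fun a => (1 / 3 : ℂ) • (LinearMap.id + a ^ 2 • σ.toLinearMap +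
      a • (σ.toLinearMap ∘ₗ σ.toLinearMap)), fun a x => by simp⟩
  have hmem : ∀ (a : ℂ) (x : g), x ∈ Module.End.eigenspace σ.toLinearMap a ↔ σ x = a • x :=
    fun a x => Module.End.mem_eigenspace_iff
  have hproj : ∀ a : ℂ, a ^ 3 = 1 →
      LinearMap.IsProj (Module.End.eigenspace σ.toLinearMap a) (P a) := by
    intro a ha
    constructor
    · intro x
      rw [hmem, hPdef]
      simp only [map_smul, map_add, h3]
      have e : a • (1 / 3 : ℂ) • (x + a ^ 2 • σ x + a • σ (σ x)) =
          (1 / 3 : ℂ) • (a • x + a ^ 3 • σ x + a ^ 2 • σ (σ x)) := by module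
      rw [e, ha]
      module
    · intro x hx
      rw [hmem] at hx
      rw [hPdef, hx, map_smul, hx]
      have e : (1 / 3 : ℂ) • (x + a ^ 2 • a • x + a • a • a • x) =
          ((1 / 3 : ℂ) * (1 + a ^ 3 + a ^ 3)) • x := by module
      rw [e, ha]
      norm_num
  have hε2' : (ε ^ 2) ^ 3 = 1 := by rw [← pow_mul, mul_comm, pow_mul, hε3, one_pow]
  have hε4 : (ε ^ 2) ^ 2 = ε := by linear_combination ε * hε3
  have h12 : ε * ε ^ 2 = 1 := by linear_combination hε3
  intro x hx
  have h4 : (2 * 6 / 3 : ℂ) = 4 := by norm_num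
  rw [h4]
  refine aux_final B hsymm hinv hkill hnd hdim b bd
    (Module.End.eigenspace σ.toLinearMap 1) (Module.End.eigenspace σ.toLinearMap ε)
    (Module.End.eigenspace σ.toLinearMap (ε ^ 2)) (P 1) (P ε) (P (ε ^ 2)) ?_
    (hproj 1 (one_pow 3)) (hproj ε hε3) (hproj _ hε2') ?_ ?_ ?_ ?_ ?_ ?_ ?_ ?_ ?_ ?_ ?_ ?_
    (fun i => (hmem _ _).mpr (hbgr i)) (fun i => (hmem _ _).mpr (hbdgr i))
    (fun y hy => hspan y ((hmem _ _).mp hy)) hdual hdim₁ ?_ x ((hmem _ _).mpr hx)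
  · ext y
    simp only [LinearMap.add_apply, hPdef, LinearMap.id_apply, hε4]
    have e : (1 / 3 : ℂ) • (y + (1 : ℂ) ^ 2 • σ y + (1 : ℂ) • σ (σ y)) +
        (1 / 3 : ℂ) • (y + ε ^ 2 • σ y + ε • σ (σ y)) +
        (1 / 3 : ℂ) • (y + ε • σ y + ε ^ 2 • σ (σ y)) =
        y + ((1 / 3 : ℂ) * (ε ^ 2 + ε + 1)) • σ y +
        ((1 / 3 : ℂ) * (ε ^ 2 + ε + 1)) • σ (σ y) := by module
    rw [e, hεs]
    simp
  · rw [Submodule.disjoint_def]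
    intro y hy hy'
    rw [hmem] at hy hy'
    rw [hy, ← sub_eq_zero, ← sub_smul] at hy'
    exact (smul_eq_zero.mp hy').resolve_left (sub_ne_zero.mpr hε1.symm)
  · intro y hy z hz
    rw [hmem] at *
    rw [hbr _ _ y z hy hz, one_mul]
  · intro y hy z hz
    rw [hmem] at *
    rw [hbr _ _ y z hy hz, one_mul]
  · intro y hy z hz
    rw [hmem] at *
    rw [hbr _ _ y z hy hz, one_mul]
  · intro y hy z hz
    rw [hmem] at *
    rw [hbr _ _ y z hy hz, h12]
  · intro y hy z hz
    rw [hmem] at *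
    rw [hbr _ _ y z hy hz, sq]
  · intro y hy z hz
    rw [hmem] at *
    rw [hbr _ _ y z hy hz, ← sq, hε4]
  · intro y hy z hz
    rw [hmem] at *
    exact horth _ _ (by rwa [one_mul]) y z hy hz
  · intro y hy z hz
    rw [hmem] at *
    exact horth _ _ (by rwa [one_mul]) y z hy hz
  · intro y hy z hz
    rw [hmem] at *
    exact horth _ _ (by rwa [← sq]) y z hy hz
  · intro y hy z hz
    rw [hmem] at *
    exact horth _ _ (by rwa [← sq, hε4]) y z hy hz
  · intro y hy
    rw [hmem] at hy
    ext z
    simp only [LinearMap.comp_apply, LieAlgebra.ad_apply, hPdef, LieHom.map_lie, hy, map_smul,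
      hε4, lie_smul, lie_add, smul_lie]
    have e : (1 / 3 : ℂ) • (⁅y, z⁆ + (1 : ℂ) ^ 2 • ε • ⁅y, σ z⁆ +
        (1 : ℂ) • ε • ε • ⁅y, σ (σ z)⁆) =
        (1 / 3 : ℂ) • (⁅y, z⁆ + ε • ⁅y, σ z⁆ + ε ^ 2 • ⁅y, σ (σ z)⁆) := by module
    exact e
  · intro U hU hU2
    refine hirr U hU fun u hu => hU2 u ?_
    rw [hmem, one_smul, hu]
end
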